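/- Sufficient condition for the perturbed control chance constraint: let Σ_q be real symmetric positive semidefinite, let C be an N-step control sequence with gains K̃_k and feedforward terms v_k, and let γ_k be defined by γ_0 = I and γ_{k+1} = (A + B K̃_k) γ_k (A + B K̃_k)^T. If ε ≥ 0 satisfies c_u √(α_u^T K̃_k Σ_k(Σ_q, C) K̃_k^T α_u) + c_u √ε √(α_u^T K̃_k γ_k K̃_k^T α_u) + α_u^T v_k ≤ β_u, then the control chance constraint holds at step k for the covariance initialized at Σ_q + εI under C, i.e. c_u √(α_u^T K̃_k Σ_k(Σ_q + εI, C) K̃_k^T α_u) + α_u^T v_k ≤ β_u. -/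

import Mathlib

open Matrix

/-- Largest eigenvalue of a real symmetric matrix (junk value `0` if not symmetric). -/
noncomputable def lamMax {n : ℕ} (M : Matrix (Fin n) (Fin n) ℝ) : ℝ :=
  if h : M.IsHermitian then ⨆ i, h.eigenvalues i else 0

/-- Smallest eigenvalue of a real symmetric matrix (junk value `0` if not symmetric). -/
noncomputable def lamMin {n : ℕ} (M : Matrix (Fin n) (Fin n) ℝ) : ℝ :=
  if h : M.IsHermitian then ⨅ i, h.eigenvalues i else 0

/-- Covariance dynamics `Σ_{k+1} = (A + B K_k) Σ_k (A + B K_k)ᵀ + D Dᵀ`. -/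
def covSeq {n m : ℕ} (A : Matrix (Fin n) (Fin n) ℝ) (B : Matrix (Fin n) (Fin m) ℝ)
    (D : Matrix (Fin n) (Fin n) ℝ) (K : ℕ → Matrix (Fin m) (Fin n) ℝ)
    (S0 : Matrix (Fin n) (Fin n) ℝ) : ℕ → Matrix (Fin n) (Fin n) ℝ
  | 0 => S0
  | k + 1 => (A + B * K k) * covSeq A B D K S0 k * (A + B * K k)ᵀ + D * Dᵀ

/-- Mean dynamics `μ_{k+1} = A μ_k + B v_k`. -/
def meanSeq {n m : ℕ} (A : Matrix (Fin n) (Fin n) ℝ) (B : Matrix (Fin n) (Fin m) ℝ)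
    (v : ℕ → Fin m → ℝ) (mu0 : Fin n → ℝ) : ℕ → Fin n → ℝ
  | 0 => mu0
  | k + 1 => A.mulVec (meanSeq A B v mu0 k) + B.mulVec (v k)

/-- Perturbation propagators `γ_0 = I`, `γ_{k+1} = (A + B K_k) γ_k (A + B K_k)ᵀ`. -/
def gammaSeq {n m : ℕ} (A : Matrix (Fin n) (Fin n) ℝ) (B : Matrix (Fin n) (Fin m) ℝ)
    (K : ℕ → Matrix (Fin m) (Fin n) ℝ) : ℕ → Matrix (Fin n) (Fin n) ℝ
  | 0 => 1
  | k + 1 => (A + B * K k) * gammaSeq A B K k * (A + B * K k)ᵀ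

/-- A planning scene: state/control constraint data `α_x, β_x, c_x, α_u, β_u, c_u`
with `c_x, c_u ≥ 0`. -/
structure Scene (n m : ℕ) where
  ax : Fin n → ℝ
  au : Fin m → ℝ
  bx : ℝ
  bu : ℝ
  cx : ℝ
  cu : ℝ
  cx_nonneg : 0 ≤ cx
  cu_nonneg : 0 ≤ cu

/-- `Steers A B D sc N K v μp Sp μq Sq` means `(μp, Sp) →_N^{(K, v)} (μq, Sq)`:
the mean and covariance trajectories initialized at `(μp, Sp)` and driven by the
control sequence `(K, v)` satisfy the state and control chance constraints for
`k = 0, …, N-1`, the terminal mean constraint `μ_N = μq`, and the terminal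
covariance constraint `λ_max(Σ_N) ≤ λ_min(Σ_q)`. -/
def Steers {n m : ℕ} (A : Matrix (Fin n) (Fin n) ℝ) (B : Matrix (Fin n) (Fin m) ℝ)
    (D : Matrix (Fin n) (Fin n) ℝ) (sc : Scene n m) (N : ℕ)
    (K : ℕ → Matrix (Fin m) (Fin n) ℝ) (v : ℕ → Fin m → ℝ)
    (μp : Fin n → ℝ) (Sp : Matrix (Fin n) (Fin n) ℝ)
    (μq : Fin n → ℝ) (Sq : Matrix (Fin n) (Fin n) ℝ) : Prop :=
  (∀ k < N, sc.cx * Real.sqrt (sc.ax ⬝ᵥ (covSeq A B D K Sp k).mulVec sc.ax)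
      + sc.ax ⬝ᵥ meanSeq A B v μp k ≤ sc.bx) ∧
  (∀ k < N, sc.cu * Real.sqrt (sc.au ⬝ᵥ (K k * covSeq A B D K Sp k * (K k)ᵀ).mulVec sc.au)
      + sc.au ⬝ᵥ v k ≤ sc.bu) ∧
  meanSeq A B v μp N = μq ∧
  lamMax (covSeq A B D K Sp N) ≤ lamMin Sq

/-- Concatenation of two (time-indexed) sequences: the first for steps `0,…,N-1`,
then the second, shifted by `N`. -/
def concatSeq {α : Type*} (N : ℕ) (f g : ℕ → α) : ℕ → α :=
  fun k => if k < N then f k else g (k - N)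

/-- Concatenation of `d` sequences with lengths `Ns i`, applied consecutively. -/
def multiConcat {α : Type*} [Zero α] : (d : ℕ) → (Fin d → ℕ) → (Fin d → ℕ → α) → ℕ → α
  | 0, _, _ => fun _ => 0
  | d + 1, Ns, fs =>
      concatSeq (Ns 0) (fs 0) (multiConcat d (fun i => Ns i.succ) (fun i => fs i.succ))

/-- `h`-hop backward reachable set of the distribution `(μ, S)`: all pairs
`(μ_q, Σ_q)` with `Σ_q` positive semidefinite from which some `h*N`-step control
sequence steers to `(μ, S)`. -/
def BRS {n m : ℕ} (A : Matrix (Fin n) (Fin n) ℝ) (B : Matrix (Fin n) (Fin m) ℝ)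
    (D : Matrix (Fin n) (Fin n) ℝ) (sc : Scene n m) (h N : ℕ)
    (μ : Fin n → ℝ) (S : Matrix (Fin n) (Fin n) ℝ) :
    Set ((Fin n → ℝ) × Matrix (Fin n) (Fin n) ℝ) :=
  { p | p.2.PosSemidef ∧
      ∃ (K : ℕ → Matrix (Fin m) (Fin n) ℝ) (v : ℕ → Fin m → ℝ),
        Steers A B D sc (h * N) K v p.1 p.2 μ S }

/-!
The covariance recursion is affine in its initial value and the noise `D * Dᵀ` enters only its
constant term, so a perturbation of the initial covariance is transported by the noise-free
recursion: `ε • 1` becomes `ε • gammaSeq A B K k`. Subadditivity of the square root then splits the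
standard deviation of the control into a nominal and a perturbation part.
-/

theorem sqrt_add_le_add_sqrt (a b : ℝ) : √(a + b) ≤ √a + √b := by
  have ha : a ≤ √a ^ 2 := (Real.sqrt_le_iff.mp le_rfl).2
  have hb : b ≤ √b ^ 2 := (Real.sqrt_le_iff.mp le_rfl).2
  have hab : 0 ≤ √a * √b := by positivity
  refine Real.sqrt_le_iff.mpr ⟨by positivity, ?_⟩
  calc
    a + b ≤ √a ^ 2 + √b ^ 2 + 2 * (√a * √b) := by linarith
    _ = (√a + √b) ^ 2 := by ring

theorem sqrt_dotProduct_add_smul_mulVec_le {ι : Type*} [Fintype ι] (M P : Matrix ι ι ℝ)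
    (x : ι → ℝ) {ε : ℝ} (hε : 0 ≤ ε) :
    √(x ⬝ᵥ (M + ε • P) *ᵥ x) ≤ √(x ⬝ᵥ M *ᵥ x) + √ε * √(x ⬝ᵥ P *ᵥ x) := by
  rw [add_mulVec, smul_mulVec, dotProduct_add, dotProduct_smul, smul_eq_mul,
    ← Real.sqrt_mul hε]
  exact sqrt_add_le_add_sqrt _ _

section Covariance

variable {n m : ℕ} (A : Matrix (Fin n) (Fin n) ℝ) (B : Matrix (Fin n) (Fin m) ℝ)
  (D : Matrix (Fin n) (Fin n) ℝ) (K : ℕ → Matrix (Fin m) (Fin n) ℝ)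

theorem covSeq_add (S P : Matrix (Fin n) (Fin n) ℝ) (k : ℕ) :
    covSeq A B D K (S + P) k = covSeq A B D K S k + covSeq A B 0 K P k := by
  induction k with
  | zero => rfl
  | succ k ih =>
    simp only [covSeq, ih, Matrix.mul_add, Matrix.add_mul, Matrix.zero_mul, add_zero]
    abel

theorem covSeq_zero_smul (ε : ℝ) (P : Matrix (Fin n) (Fin n) ℝ) (k : ℕ) :
    covSeq A B 0 K (ε • P) k = ε • covSeq A B 0 K P k := by
  induction k with
  | zero => rfl
  | succ k ih =>
    simp only [covSeq, ih, Matrix.mul_smul, Matrix.smul_mul, Matrix.zero_mul, add_zero]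

theorem covSeq_zero_one (k : ℕ) : covSeq A B 0 K 1 k = gammaSeq A B K k := by
  induction k with
  | zero => rfl
  | succ k ih => simp only [covSeq, gammaSeq, ih, Matrix.zero_mul, add_zero]

theorem covSeq_add_smul_one (S : Matrix (Fin n) (Fin n) ℝ) (ε : ℝ) (k : ℕ) :
    covSeq A B D K (S + ε • 1) k = covSeq A B D K S k + ε • gammaSeq A B K k := by
  rw [covSeq_add, covSeq_zero_smul, covSeq_zero_one]

end Covariance

/-- sufficient condition for the perturbed control chance
constraint. `K` and `v` are the gains and feedforward terms of `C`. -/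
theorem perturbed_control_chance_constraint {n m : ℕ}
    (A : Matrix (Fin n) (Fin n) ℝ) (B : Matrix (Fin n) (Fin m) ℝ)
    (D : Matrix (Fin n) (Fin n) ℝ)
    (au : Fin m → ℝ) (bu cu : ℝ) (hcu : 0 ≤ cu)
    (Sq : Matrix (Fin n) (Fin n) ℝ) (hSq : Sq.PosSemidef)
    (N : ℕ) (K : ℕ → Matrix (Fin m) (Fin n) ℝ) (v : ℕ → Fin m → ℝ)
    (k : ℕ) (hk : k < N) (ε : ℝ) (hε : 0 ≤ ε)
    (hcond : cu * Real.sqrt (au ⬝ᵥ (K k * covSeq A B D K Sq k * (K k)ᵀ).mulVec au)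
        + cu * Real.sqrt ε * Real.sqrt (au ⬝ᵥ (K k * gammaSeq A B K k * (K k)ᵀ).mulVec au)
        + au ⬝ᵥ v k ≤ bu) :
    cu * Real.sqrt (au ⬝ᵥ (K k * covSeq A B D K
        (Sq + ε • (1 : Matrix (Fin n) (Fin n) ℝ)) k * (K k)ᵀ).mulVec au)
      + au ⬝ᵥ v k ≤ bu := by
  have hcov : K k * covSeq A B D K (Sq + ε • 1) k * (K k)ᵀ
      = K k * covSeq A B D K Sq k * (K k)ᵀ + ε • (K k * gammaSeq A B K k * (K k)ᵀ) := by
    rw [covSeq_add_smul_one, Matrix.mul_add, Matrix.add_mul, Matrix.mul_smul, Matrix.smul_mul]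
  have hsqrt := sqrt_dotProduct_add_smul_mulVec_le (K k * covSeq A B D K Sq k * (K k)ᵀ)
    (K k * gammaSeq A B K k * (K k)ᵀ) au hε
  rw [hcov]
  calc
    _ ≤ cu * (√(au ⬝ᵥ (K k * covSeq A B D K Sq k * (K k)ᵀ) *ᵥ au)
          + √ε * √(au ⬝ᵥ (K k * gammaSeq A B K k * (K k)ᵀ) *ᵥ au)) + au ⬝ᵥ v k := by
      gcongr
    _ ≤ bu := by rwa [mul_add, ← mul_assoc]
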